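/- Let k ≥ 1 be an integer, t > 0, and let ψ : (0, ∞) → ℝ be twice continuously differentiable. Define h : (0, ∞) → ℝ by h(r) = ψ(4 t r^{k/2 + 1} / (k/2 + 1)). Then h satisfies h''(r) + h'(r)/r = 8 t² r^k sinh(2 h(r)) for all r > 0 if and only if ψ satisfies the Painlevé III equation ψ''(ρ) + ψ'(ρ)/ρ = (1/2) sinh(2 ψ(ρ)) for all ρ > 0. -/

import Mathlib

/-!
Under a substitution `ρ = g r`, the chain rule turns the radial Laplacian in `r` into
`(g')² ∂²/∂ρ² + (Δg) ∂/∂ρ`. For `g r = c * r ^ a`, `log g` is affine in the harmonic function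
`log r`, so `Δg = (g')² / g` and the radial Laplacians in `r` and `ρ` differ only by the factor
`(g')²`. For `a = k / 2 + 1` and `c = 4 * t / a` this factor is `16 * t ^ 2 * r ^ k`, and `g` maps
the positive reals onto themselves.
-/

open Filter Set Topology

section RadialLaplacian

variable {E : Type*} [NormedAddCommGroup E] [NormedSpace ℝ E]

/-- The radial part `f'' + f' / r` of the planar Laplacian, for a profile `f` with values in a
normed space. It is the common left-hand side of the two radial equations to be compared. -/
noncomputable def radialLaplacian (f : ℝ → E) (r : ℝ) : E :=
  deriv (deriv f) r + r⁻¹ • deriv f r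

theorem radialLaplacian_congr {f g : ℝ → E} {r : ℝ} (hfg : f =ᶠ[𝓝 r] g) :
    radialLaplacian f r = radialLaplacian g r := by
  rw [radialLaplacian, hfg.deriv.deriv_eq, hfg.deriv_eq, radialLaplacian]

theorem deriv_deriv_comp {f : ℝ → E} {g : ℝ → ℝ} {r : ℝ}
    (hf : ∀ᶠ y in 𝓝 (g r), DifferentiableAt ℝ f y) (hf' : DifferentiableAt ℝ (deriv f) (g r))
    (hg : ∀ᶠ x in 𝓝 r, DifferentiableAt ℝ g x) (hg' : DifferentiableAt ℝ (deriv g) r) :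
    deriv (deriv (f ∘ g)) r =
      deriv g r ^ 2 • deriv (deriv f) (g r) + deriv (deriv g) r • deriv f (g r) := by
  have chain_rule : deriv (f ∘ g) =ᶠ[𝓝 r] fun x ↦ deriv g x • deriv f (g x) := by
    filter_upwards [hg, hg.self_of_nhds.continuousAt.eventually hf] with x hgx hfx
    exact deriv.scomp x hfx hgx
  have hf'g : HasDerivAt (fun x ↦ deriv f (g x)) (deriv g r • deriv (deriv f) (g r)) r :=
    hf'.hasDerivAt.scomp r hg.self_of_nhds.hasDerivAt
  rw [chain_rule.deriv_eq, (hg'.hasDerivAt.fun_smul hf'g).deriv, smul_smul, ← sq]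

theorem radialLaplacian_comp {f : ℝ → E} {g : ℝ → ℝ} {r : ℝ}
    (hf : ∀ᶠ y in 𝓝 (g r), DifferentiableAt ℝ f y) (hf' : DifferentiableAt ℝ (deriv f) (g r))
    (hg : ∀ᶠ x in 𝓝 r, DifferentiableAt ℝ g x) (hg' : DifferentiableAt ℝ (deriv g) r) :
    radialLaplacian (f ∘ g) r =
      deriv g r ^ 2 • deriv (deriv f) (g r) + radialLaplacian g r • deriv f (g r) := by
  rw [radialLaplacian, deriv_deriv_comp hf hf' hg hg',
    deriv.scomp r hf.self_of_nhds hg.self_of_nhds, radialLaplacian, smul_eq_mul]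
  module

theorem deriv_const_mul_rpow (c a : ℝ) :
    deriv (fun x : ℝ ↦ c * x ^ a) = fun x ↦ c * a * x ^ (a - 1) := by
  funext x
  rw [deriv_const_mul_field, Real.deriv_rpow_const, mul_assoc]

theorem radialLaplacian_const_mul_rpow (c a : ℝ) {r : ℝ} (hr : 0 < r) :
    radialLaplacian (fun x ↦ c * x ^ a) r = (c * a * r ^ (a - 1)) ^ 2 * (c * r ^ a)⁻¹ := by
  simp only [radialLaplacian, deriv_const_mul_rpow, Real.rpow_sub_one hr.ne', smul_eq_mul]
  rcases eq_or_ne c 0 with rfl | hc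
  · simp
  · field_simp
    ring

theorem radialLaplacian_comp_const_mul_rpow {f : ℝ → E} {c a r : ℝ} (hr : 0 < r)
    (hf : ∀ᶠ y in 𝓝 (c * r ^ a), DifferentiableAt ℝ f y)
    (hf' : DifferentiableAt ℝ (deriv f) (c * r ^ a)) :
    radialLaplacian (fun x ↦ f (c * x ^ a)) r =
      (c * a * r ^ (a - 1)) ^ 2 • radialLaplacian f (c * r ^ a) := by
  have differentiableAt_rpow (C p : ℝ) {x : ℝ} (hx : 0 < x) :
      DifferentiableAt ℝ (fun x ↦ C * x ^ p) x :=
    (Real.differentiableAt_rpow_const_of_ne p hx.ne').const_mul C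
  have hg : ∀ᶠ x in 𝓝 r, DifferentiableAt ℝ (fun x ↦ c * x ^ a) x :=
    (eventually_gt_nhds hr).mono fun _ ↦ differentiableAt_rpow c a
  have hg' : DifferentiableAt ℝ (deriv fun x ↦ c * x ^ a) r := by
    rw [deriv_const_mul_rpow]
    exact differentiableAt_rpow _ _ hr
  have hcomp := radialLaplacian_comp (g := fun x ↦ c * x ^ a) hf hf' hg hg'
  rw [radialLaplacian_const_mul_rpow c a hr, deriv_const_mul_rpow, mul_smul, ← smul_add] at hcomp
  exact hcomp

theorem forall_pos_const_mul_rpow_iff {c a : ℝ} (hc : 0 < c) (ha : a ≠ 0) {p : ℝ → Prop} :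
    (∀ r > 0, p (c * r ^ a)) ↔ ∀ ρ > 0, p ρ := by
  refine ⟨fun h ρ hρ ↦ ?_, fun h r hr ↦ h _ (mul_pos hc (Real.rpow_pos_of_pos hr a))⟩
  have hρc : 0 < ρ / c := div_pos hρ hc
  have hinv : c * ((ρ / c) ^ a⁻¹) ^ a = ρ := by
    rw [Real.rpow_inv_rpow hρc.le ha, mul_div_cancel₀ _ hc.ne']
  exact hinv ▸ h _ (Real.rpow_pos_of_pos hρc a⁻¹)

theorem radialLaplacian_eq_iff_of_eq_comp_const_mul_rpow {ψ h : ℝ → E} {c a : ℝ}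
    (hc : 0 < c) (ha : a ≠ 0) (F : E → E)
    (hψ : DifferentiableOn ℝ ψ (Ioi 0)) (hψ' : DifferentiableOn ℝ (deriv ψ) (Ioi 0))
    (hh : ∀ r > 0, h r = ψ (c * r ^ a)) :
    (∀ r > 0, radialLaplacian h r = (c * a * r ^ (a - 1)) ^ 2 • F (h r)) ↔
      ∀ ρ > 0, radialLaplacian ψ ρ = F (ψ ρ) := by
  rw [← forall_pos_const_mul_rpow_iff hc ha (p := fun ρ ↦ radialLaplacian ψ ρ = F (ψ ρ))]
  refine forall₂_congr fun r hr ↦ ?_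
  have hρ : 0 < c * r ^ a := mul_pos hc (Real.rpow_pos_of_pos hr a)
  have hfactor : (c * a * r ^ (a - 1)) ^ 2 ≠ 0 := by positivity
  rw [radialLaplacian_congr ((eventually_gt_nhds hr).mono hh),
    radialLaplacian_comp_const_mul_rpow hr (hψ.eventually_differentiableAt (Ioi_mem_nhds hρ))
      (hψ'.differentiableAt (Ioi_mem_nhds hρ)), hh r hr, smul_right_inj hfactor]

theorem stmt9_general {k t : ℝ} (hkt : 0 < t / (k / 2 + 1)) {ψ h : ℝ → E} (F : E → E)
    (hψ : DifferentiableOn ℝ ψ (Ioi 0)) (hψ' : DifferentiableOn ℝ (deriv ψ) (Ioi 0))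
    (hh : ∀ r > 0, h r = ψ (4 * t * r ^ (k / 2 + 1) / (k / 2 + 1))) :
    (∀ r > 0, radialLaplacian h r = (8 * t ^ 2 * r ^ k) • F (h r)) ↔
      ∀ ρ > 0, radialLaplacian ψ ρ = (1 / 2 : ℝ) • F (ψ ρ) := by
  have hc : 0 < 4 * t / (k / 2 + 1) := by
    rw [mul_div_assoc]
    positivity
  have ha : k / 2 + 1 ≠ 0 := fun ha ↦ by simp [ha] at hkt
  have hh' : ∀ r > 0, h r = ψ (4 * t / (k / 2 + 1) * r ^ (k / 2 + 1)) := fun r hr ↦ by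
    rw [hh r hr, div_mul_eq_mul_div]
  have hfactor : ∀ r > 0, 8 * t ^ 2 * r ^ k =
      (4 * t / (k / 2 + 1) * (k / 2 + 1) * r ^ (k / 2 + 1 - 1)) ^ 2 * (1 / 2) := fun r hr ↦ by
    have hsq : (r ^ (k / 2)) ^ 2 = r ^ k := by
      rw [← Real.rpow_mul_natCast hr.le, Nat.cast_ofNat, div_mul_cancel₀ k two_ne_zero]
    rw [div_mul_cancel₀ _ ha, add_sub_cancel_right, mul_pow, hsq]
    ring
  rw [← radialLaplacian_eq_iff_of_eq_comp_const_mul_rpow hc ha (fun x ↦ (1 / 2 : ℝ) • F x)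
    hψ hψ' hh']
  exact forall₂_congr fun r hr ↦ by rw [hfactor r hr, mul_smul]

end RadialLaplacian

theorem stmt9 (k : ℕ) (hk : 1 ≤ k) (t : ℝ) (ht : 0 < t)
    (ψ : ℝ → ℝ) (hψ : ContDiffOn ℝ 2 ψ (Set.Ioi 0))
    (h : ℝ → ℝ)
    (hh : ∀ r : ℝ, h r = ψ (4 * t * r ^ ((k : ℝ) / 2 + 1) / ((k : ℝ) / 2 + 1))) :
    (∀ r > (0 : ℝ), deriv (deriv h) r + deriv h r / r
        = 8 * t ^ 2 * r ^ k * Real.sinh (2 * h r)) ↔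
      (∀ ρ > (0 : ℝ), deriv (deriv ψ) ρ + deriv ψ ρ / ρ
        = (1 / 2) * Real.sinh (2 * ψ ρ)) := by
  have hψ' : ContDiffOn ℝ 1 (deriv ψ) (Ioi 0) := hψ.deriv_of_isOpen isOpen_Ioi (by norm_num)
  simpa only [radialLaplacian, smul_eq_mul, inv_mul_eq_div, Real.rpow_natCast] using
    stmt9_general (k := k) (by positivity) (fun x ↦ Real.sinh (2 * x))
      (hψ.differentiableOn two_ne_zero) (hψ'.differentiableOn one_ne_zero) fun r _ ↦ hh r
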